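/- arXiv:1911.12140 — 2 statements merged into one kernel-verified Lean document; each statement's English description precedes it below -/
import Mathlib

section
/- For every m ≥ 1, x − σ_m(x) = i_m/(q_1 q_2 ⋯ q_m) + (σ^m(x)/(q_1 q_2 ⋯ q_m))·(1 − q_m). -/
/-- `q_1 q_2 ⋯ q_n` (1-based indexing; `prodQ q 0 = 1`). -/
noncomputable def prodQ (q : ℕ → ℕ) (n : ℕ) : ℝ :=
  ∏ j ∈ Finset.Icc 1 n, (q j : ℝ)

/-- The positive Cantor series value `x = Σ_{n=1}^∞ i_n/(q_1 ⋯ q_n)`. -/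
noncomputable def cantorVal (q i : ℕ → ℕ) : ℝ :=
  ∑' n : ℕ, (i (n + 1) : ℝ) / prodQ q (n + 1)

/-- The generalized shift operator
`σ_m = Σ_{k=1}^{m-1} i_k/(q_1⋯q_k) + Σ_{l=m+1}^∞ i_l/(q_1⋯q_{m-1} q_{m+1}⋯q_l)`. -/
noncomputable def sigmaC (q i : ℕ → ℕ) (m : ℕ) : ℝ :=
  (∑ k ∈ Finset.Icc 1 (m - 1), (i k : ℝ) / prodQ q k) +
    ∑' t : ℕ, (i (m + 1 + t) : ℝ) /
      (prodQ q (m - 1) * ∏ j ∈ Finset.Icc (m + 1) (m + 1 + t), (q j : ℝ))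

/-- The `m`-fold shift `σ^m(x) = Σ_{k=m+1}^∞ i_k/(q_{m+1} ⋯ q_k)`. -/
noncomputable def shiftVal (q i : ℕ → ℕ) (m : ℕ) : ℝ :=
  ∑' t : ℕ, (i (m + 1 + t) : ℝ) / ∏ j ∈ Finset.Icc (m + 1) (m + 1 + t), (q j : ℝ)

/-!
Write `Q_n = q_1 ⋯ q_n`. Cutting the series after the `m`-th digit gives
`x = Σ_{k ≤ m} i_k / Q_k + σ^m(x) / Q_m`, whereas removing the `m`-th digit together with its base
gives `σ_m(x) = Σ_{k < m} i_k / Q_k + σ^m(x) / Q_{m-1}`. The first `m - 1` terms cancel in the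
difference, and `1 / Q_{m-1} = q_m / Q_m`. Only the cut of `x` needs convergence, which follows from
the telescoping bound `i_n / Q_n ≤ 1 / Q_{n-1} - 1 / Q_n`.
-/

section PartialProducts

variable (q : ℕ → ℕ)

lemma prodQ_succ (n : ℕ) : prodQ q (n + 1) = prodQ q n * q (n + 1) :=
  Finset.prod_Icc_succ_top (by omega) _

lemma prodQ_mul_prod_Icc {m n : ℕ} (hmn : m ≤ n) :
    prodQ q m * ∏ j ∈ Finset.Icc (m + 1) n, (q j : ℝ) = prodQ q n := by
  simpa only [prodQ, Finset.Ico_add_one_right_eq_Icc] using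
    Finset.prod_Ico_consecutive (fun j => (q j : ℝ)) (Nat.le_add_left 1 m)
      (Nat.add_le_add_right hmn 1)

variable {q}

lemma prodQ_pos (hq : ∀ n, 1 ≤ n → 0 < q n) (n : ℕ) : 0 < prodQ q n :=
  Finset.prod_pos fun j hj => Nat.cast_pos.2 (hq j (Finset.mem_Icc.1 hj).1)

end PartialProducts

section Convergence

variable {q i : ℕ → ℕ}

lemma digit_div_prodQ_le (hi : ∀ n, 1 ≤ n → i n < q n) (n : ℕ) :
    (i (n + 1) : ℝ) / prodQ q (n + 1) ≤ 1 / prodQ q n - 1 / prodQ q (n + 1) := by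
  have hQ := prodQ_pos fun k hk => Nat.zero_lt_of_lt (hi k hk)
  have digit_add_one_le : (i (n + 1) : ℝ) + 1 ≤ q (n + 1) := by
    exact_mod_cast hi (n + 1) (by omega)
  rw [le_sub_iff_add_le, ← add_div, div_le_div_iff₀ (hQ (n + 1)) (hQ n), prodQ_succ, one_mul,
    mul_comm (prodQ q n)]
  exact mul_le_mul_of_nonneg_right digit_add_one_le (hQ n).le

lemma sum_digit_div_prodQ_le (hi : ∀ n, 1 ≤ n → i n < q n) (N : ℕ) :
    ∑ n ∈ Finset.range N, (i (n + 1) : ℝ) / prodQ q (n + 1) ≤ 1 - 1 / prodQ q N :=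
  calc ∑ n ∈ Finset.range N, (i (n + 1) : ℝ) / prodQ q (n + 1)
      ≤ ∑ n ∈ Finset.range N, (1 / prodQ q n - 1 / prodQ q (n + 1)) :=
        Finset.sum_le_sum fun n _ => digit_div_prodQ_le hi n
    _ = 1 / prodQ q 0 - 1 / prodQ q N := Finset.sum_range_sub' (fun n => 1 / prodQ q n) N
    _ = 1 - 1 / prodQ q N := by simp [prodQ]

lemma summable_digit_div_prodQ (hi : ∀ n, 1 ≤ n → i n < q n) :
    Summable fun n : ℕ => (i (n + 1) : ℝ) / prodQ q (n + 1) := by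
  have hQ := prodQ_pos fun k hk => Nat.zero_lt_of_lt (hi k hk)
  exact summable_of_sum_range_le (fun n => div_nonneg (Nat.cast_nonneg _) (hQ _).le) fun N =>
    (sum_digit_div_prodQ_le hi N).trans (sub_le_self 1 (one_div_pos.2 (hQ N)).le)

end Convergence

lemma cantorVal_eq_sum_add_shiftVal_div {q i : ℕ → ℕ}
    (hs : Summable fun n : ℕ => (i (n + 1) : ℝ) / prodQ q (n + 1)) (m : ℕ) :
    cantorVal q i =
      ∑ k ∈ Finset.Icc 1 m, (i k : ℝ) / prodQ q k + shiftVal q i m / prodQ q m := by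
  have head : ∑ n ∈ Finset.range m, (i (n + 1) : ℝ) / prodQ q (n + 1) =
      ∑ k ∈ Finset.Icc 1 m, (i k : ℝ) / prodQ q k := by
    rw [Finset.range_eq_Ico, Finset.sum_Ico_add' (fun k => (i k : ℝ) / prodQ q k), zero_add,
      Finset.Ico_add_one_right_eq_Icc]
  have tail : ∑' t : ℕ, (i (t + m + 1) : ℝ) / prodQ q (t + m + 1) =
      shiftVal q i m / prodQ q m := by
    rw [shiftVal, ← tsum_div_const]
    refine tsum_congr fun t => ?_
    rw [show t + m + 1 = m + 1 + t by omega,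
      ← prodQ_mul_prod_Icc q (show m ≤ m + 1 + t by omega), div_div, mul_comm (prodQ q m)]
  rw [cantorVal, ← hs.sum_add_tsum_nat_add m, head, tail]

lemma sigmaC_eq_sum_add_shiftVal_div (q i : ℕ → ℕ) (m : ℕ) :
    sigmaC q i m =
      ∑ k ∈ Finset.Icc 1 (m - 1), (i k : ℝ) / prodQ q k + shiftVal q i m / prodQ q (m - 1) := by
  simp only [sigmaC, shiftVal, ← tsum_div_const, div_div, mul_comm (prodQ q (m - 1))]

theorem stmt_9_general (q i : ℕ → ℕ) (hq : ∀ n, 1 ≤ n → 0 < q n)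
    (hs : Summable fun n : ℕ => (i (n + 1) : ℝ) / prodQ q (n + 1)) (m : ℕ) (hm : 1 ≤ m) :
    cantorVal q i - sigmaC q i m =
      (i m : ℝ) / prodQ q m + shiftVal q i m / prodQ q m * (1 - (q m : ℝ)) := by
  obtain ⟨n, rfl⟩ := Nat.exists_eq_add_of_le' hm
  have inv_prodQ : 1 / prodQ q n = q (n + 1) / prodQ q (n + 1) := by
    have hqn : (q (n + 1) : ℝ) ≠ 0 := Nat.cast_ne_zero.2 (hq (n + 1) hm).ne'
    rw [prodQ_succ, div_mul_cancel_right₀ hqn, one_div]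
  rw [cantorVal_eq_sum_add_shiftVal_div hs (n + 1), sigmaC_eq_sum_add_shiftVal_div,
    Nat.add_sub_cancel, Finset.sum_Icc_succ_top hm, div_eq_mul_one_div _ (prodQ q n), inv_prodQ]
  ring

theorem stmt_9 (q i : ℕ → ℕ) (hq : ∀ n, 1 ≤ n → 2 ≤ q n)
    (hi : ∀ n, 1 ≤ n → i n ≤ q n - 1) (m : ℕ) (hm : 1 ≤ m) :
    cantorVal q i - sigmaC q i m =
      (i m : ℝ) / prodQ q m + shiftVal q i m / prodQ q m * (1 - (q m : ℝ)) := by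
  have hq_pos : ∀ n, 1 ≤ n → 0 < q n := fun n hn => two_pos.trans_le (hq n hn)
  exact stmt_9_general q i hq_pos
    (summable_digit_div_prodQ fun n hn => Nat.lt_of_le_sub_one (hq_pos n hn) (hi n hn)) m hm
end

section
/- Fix m ≥ 1. If (i_n) and (i'_n) are two digit sequences with i_k = i'_k for all k ≤ m, with sign-variable Q̃-expansion values x and x' respectively, then σ_m(x) − σ_m(x') = (x − x')/q_{i_m,m}. In particular, on each cylinder set of digit sequences with fixed first m digits, σ_m is an affine function of x (with slope 1/q_{i_m,m}), i.e., σ_m is a piecewise linear function. -/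
/-- `a_{d,n} = Σ_{t=0}^{d-1} q_{t,n}` (so `a_{0,n} = 0`). -/
noncomputable def aQt (qt : ℕ → ℕ → ℝ) (d n : ℕ) : ℝ :=
  ∑ t ∈ Finset.range d, qt t n

/-- `∏_{j=1}^{n} q_{i_j,j}` (1-based indexing; `prodQt qt i 0 = 1`). -/
noncomputable def prodQt (qt : ℕ → ℕ → ℝ) (i : ℕ → ℕ) (n : ℕ) : ℝ :=
  ∏ j ∈ Finset.Icc 1 n, qt (i j) j

/-- The positive `Q̃`-expansion value
`x = a_{i_1,1} + Σ_{n=2}^∞ a_{i_n,n} ∏_{j=1}^{n-1} q_{i_j,j}`. -/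
noncomputable def qtVal (qt : ℕ → ℕ → ℝ) (i : ℕ → ℕ) : ℝ :=
  aQt qt (i 1) 1 + ∑' t : ℕ, aQt qt (i (t + 2)) (t + 2) * prodQt qt i (t + 1)

/-- The generalized shift operator for `Q̃`-expansions:
`σ_m = a_{i_1,1} + Σ_{n=2}^{m-1} a_{i_n,n} ∏_{j=1}^{n-1} q_{i_j,j}
      + Σ_{l=m+1}^∞ a_{i_l,l} ∏_{j=1, j≠m}^{l-1} q_{i_j,j}`
(the first two summands form the partial sum `Σ_{n=1}^{m-1}`, empty when `m = 1`). -/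
noncomputable def qtSigma (qt : ℕ → ℕ → ℝ) (i : ℕ → ℕ) (m : ℕ) : ℝ :=
  (∑ n ∈ Finset.Icc 1 (m - 1), aQt qt (i n) n * prodQt qt i (n - 1)) +
    ∑' t : ℕ, aQt qt (i (m + 1 + t)) (m + 1 + t) *
      (prodQt qt i (m - 1) * ∏ j ∈ Finset.Icc (m + 1) (m + t), qt (i j) j)

/-- `σ^m(x) = Σ_{l=m+1}^∞ a_{i_l,l} ∏_{j=m+1}^{l-1} q_{i_j,j}`. -/
noncomputable def qtShift (qt : ℕ → ℕ → ℝ) (i : ℕ → ℕ) (m : ℕ) : ℝ :=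
  ∑' t : ℕ, aQt qt (i (m + 1 + t)) (m + 1 + t) * ∏ j ∈ Finset.Icc (m + 1) (m + t), qt (i j) j

-- `(-1)^{ρ_n}` where `ρ_n = 1` if `n ∈ N_B` and `ρ_n = 2` otherwise.
open Classical in
noncomputable def sgn (NB : Set ℕ) (n : ℕ) : ℝ := if n ∈ NB then -1 else 1

/-- The sign-variable `Q̃`-expansion value
`x = (-1)^{ρ_1} a_{i_1,1} + Σ_{n=2}^∞ (-1)^{ρ_n} a_{i_n,n} ∏_{j=1}^{n-1} q_{i_j,j}`. -/
noncomputable def svQtVal (NB : Set ℕ) (qt : ℕ → ℕ → ℝ) (i : ℕ → ℕ) : ℝ :=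
  sgn NB 1 * aQt qt (i 1) 1 +
    ∑' t : ℕ, sgn NB (t + 2) * aQt qt (i (t + 2)) (t + 2) * prodQt qt i (t + 1)

/-- The generalized shift operator for sign-variable `Q̃`-expansions:
`σ_m = Σ_{n=1}^{m-1} (-1)^{ρ_n} a_{i_n,n} ∏_{j=1}^{n-1} q_{i_j,j}
      + Σ_{l=m+1}^∞ (-1)^{ρ_l} a_{i_l,l} ∏_{j=1, j≠m}^{l-1} q_{i_j,j}`. -/
noncomputable def svQtSigma (NB : Set ℕ) (qt : ℕ → ℕ → ℝ) (i : ℕ → ℕ) (m : ℕ) : ℝ :=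
  (∑ n ∈ Finset.Icc 1 (m - 1), sgn NB n * aQt qt (i n) n * prodQt qt i (n - 1)) +
    ∑' t : ℕ, sgn NB (m + 1 + t) * aQt qt (i (m + 1 + t)) (m + 1 + t) *
      (prodQt qt i (m - 1) * ∏ j ∈ Finset.Icc (m + 1) (m + t), qt (i j) j)

/-!
Split the expansion of `x` after its `m`-th summand into the partial sum `S_m` and the tail `T_m`.
Every summand of `T_m` contains the factor `q_{i_m,m}`, and `σ_m` drops the `m`-th summand and
divides that factor out of the tail, so
`σ_m(x) = S_{m-1} + T_m / q_{i_m,m} = x / q_{i_m,m} + (S_{m-1} - S_m / q_{i_m,m})`.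
The bracket depends only on the first `m` digits. The series converges absolutely because
`a_{i_n,n} ≤ 1 - q_{i_n,n}`, so the moduli of its summands are bounded by the differences of
consecutive products, which telescope.
-/

theorem summable_mul_prod_range {a q : ℕ → ℝ} (ha : ∀ n, 0 ≤ a n) (hq : ∀ n, 0 ≤ q n)
    (haq : ∀ n, a n + q n ≤ 1) : Summable fun n ↦ a n * ∏ j ∈ Finset.range n, q j := by
  have hprod (n : ℕ) : 0 ≤ ∏ j ∈ Finset.range n, q j := Finset.prod_nonneg fun j _ ↦ hq j
  refine summable_of_sum_range_le (c := 1) (fun n ↦ mul_nonneg (ha n) (hprod n)) fun n ↦ ?_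
  calc ∑ k ∈ Finset.range n, a k * ∏ j ∈ Finset.range k, q j
      ≤ ∑ k ∈ Finset.range n,
          (∏ j ∈ Finset.range k, q j - ∏ j ∈ Finset.range (k + 1), q j) := by
        refine Finset.sum_le_sum fun k _ ↦ ?_
        rw [Finset.prod_range_succ]
        linarith [mul_le_mul_of_nonneg_right (haq k) (hprod k)]
    _ = 1 - ∏ j ∈ Finset.range n, q j := by
        rw [Finset.sum_range_sub', Finset.prod_range_zero]
    _ ≤ 1 := sub_le_self 1 (hprod n)

theorem abs_sgn (NB : Set ℕ) (n : ℕ) : |sgn NB n| = 1 := by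
  unfold sgn
  split_ifs <;> simp

theorem aQt_nonneg {qt : ℕ → ℕ → ℝ} {d n : ℕ} (hqt : ∀ t < d, 0 ≤ qt t n) :
    0 ≤ aQt qt d n :=
  Finset.sum_nonneg fun t ht ↦ hqt t (Finset.mem_range.mp ht)

theorem aQt_add_le_aQt_succ {qt : ℕ → ℕ → ℝ} {d M n : ℕ} (hd : d ≤ M)
    (hqt : ∀ t ≤ M, 0 ≤ qt t n) :
    aQt qt d n + qt d n ≤ aQt qt (M + 1) n := by
  rw [aQt, ← Finset.sum_range_succ (qt · n)]
  refine Finset.sum_le_sum_of_subset_of_nonneg (Finset.range_mono (by lia)) fun t ht _ ↦ ?_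
  exact hqt t (Finset.mem_range_succ_iff.mp ht)

theorem prodQt_eq_prod_range (qt : ℕ → ℕ → ℝ) (i : ℕ → ℕ) (n : ℕ) :
    prodQt qt i n = ∏ j ∈ Finset.range n, qt (i (j + 1)) (j + 1) := by
  rw [Finset.range_eq_Ico, Finset.prod_Ico_add' (fun j ↦ qt (i j) j) 0 n 1,
    Finset.Ico_add_one_right_eq_Icc, zero_add, prodQt]

theorem prodQt_add (qt : ℕ → ℕ → ℝ) (i : ℕ → ℕ) (n t : ℕ) :
    prodQt qt i (n + t) = prodQt qt i n * ∏ j ∈ Finset.Icc (n + 1) (n + t), qt (i j) j := by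
  simp only [prodQt, ← Finset.Ico_add_one_right_eq_Icc]
  exact (Finset.prod_Ico_consecutive _ (by lia) (by lia)).symm

theorem prodQt_succ (qt : ℕ → ℕ → ℝ) (i : ℕ → ℕ) (n : ℕ) :
    prodQt qt i (n + 1) = prodQt qt i n * qt (i (n + 1)) (n + 1) := by
  rw [prodQt_add, Finset.Icc_self, Finset.prod_singleton]

theorem prodQt_congr {qt : ℕ → ℕ → ℝ} {i i' : ℕ → ℕ} {n : ℕ}
    (h : ∀ k, 1 ≤ k → k ≤ n → i k = i' k) :
    prodQt qt i n = prodQt qt i' n :=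
  Finset.prod_congr rfl fun j hj ↦ by
    obtain ⟨hj1, hjn⟩ := Finset.mem_Icc.mp hj
    rw [h j hj1 hjn]

/-- The summand `(-1)^{ρ_{n+1}} a_{i_{n+1},n+1} ∏_{j=1}^{n} q_{i_j,j}` of the sign-variable
`Q̃`-expansion. The index is shifted by one against the paper, so that the series starts at `0`. -/
noncomputable def svQtTerm (NB : Set ℕ) (qt : ℕ → ℕ → ℝ) (i : ℕ → ℕ) (n : ℕ) : ℝ :=
  sgn NB (n + 1) * aQt qt (i (n + 1)) (n + 1) * prodQt qt i n

/-- The sum of the first `n` summands of the sign-variable `Q̃`-expansion, which depends only on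
the first `n` digits. -/
noncomputable def svQtPartialSum (NB : Set ℕ) (qt : ℕ → ℕ → ℝ) (i : ℕ → ℕ) (n : ℕ) : ℝ :=
  ∑ k ∈ Finset.range n, svQtTerm NB qt i k

theorem sum_Icc_eq_svQtPartialSum (NB : Set ℕ) (qt : ℕ → ℕ → ℝ) (i : ℕ → ℕ) (p : ℕ) :
    ∑ n ∈ Finset.Icc 1 p, sgn NB n * aQt qt (i n) n * prodQt qt i (n - 1) =
      svQtPartialSum NB qt i p := by
  rw [svQtPartialSum, Finset.range_eq_Ico, ← Finset.Ico_add_one_right_eq_Icc]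
  exact (Finset.sum_Ico_add' (fun n ↦ sgn NB n * aQt qt (i n) n * prodQt qt i (n - 1)) 0 p 1).symm

section Expansion

variable {NB : Set ℕ} {qt : ℕ → ℕ → ℝ} {i i' : ℕ → ℕ}

theorem summable_svQtTerm {mS : ℕ → ℕ} (hqt : ∀ n, 1 ≤ n → ∀ d ≤ mS n, 0 ≤ qt d n)
    (hsum : ∀ n, 1 ≤ n → aQt qt (mS n + 1) n ≤ 1) (hdig : ∀ n, 1 ≤ n → i n ≤ mS n) :
    Summable (svQtTerm NB qt i) := by
  have ha (n : ℕ) : 0 ≤ aQt qt (i (n + 1)) (n + 1) :=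
    aQt_nonneg fun t ht ↦ hqt _ n.succ_pos t (ht.le.trans (hdig _ n.succ_pos))
  have hq (n : ℕ) : 0 ≤ qt (i (n + 1)) (n + 1) := hqt _ n.succ_pos _ (hdig _ n.succ_pos)
  have haq (n : ℕ) : aQt qt (i (n + 1)) (n + 1) + qt (i (n + 1)) (n + 1) ≤ 1 :=
    (aQt_add_le_aQt_succ (hdig _ n.succ_pos) (hqt _ n.succ_pos)).trans (hsum _ n.succ_pos)
  refine (summable_mul_prod_range ha hq haq).of_norm_bounded fun n ↦ le_of_eq ?_
  rw [svQtTerm, prodQt_eq_prod_range, Real.norm_eq_abs, abs_mul, abs_mul, abs_sgn, one_mul,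
    abs_of_nonneg (ha n), abs_of_nonneg (Finset.prod_nonneg fun j _ ↦ hq j)]

theorem svQtTerm_congr {n : ℕ} (h : ∀ k, 1 ≤ k → k ≤ n + 1 → i k = i' k) :
    svQtTerm NB qt i n = svQtTerm NB qt i' n := by
  rw [svQtTerm, svQtTerm, h (n + 1) n.succ_pos le_rfl,
    prodQt_congr fun k hk hkn ↦ h k hk (hkn.trans n.le_succ)]

theorem svQtPartialSum_congr {n : ℕ} (h : ∀ k, 1 ≤ k → k ≤ n → i k = i' k) :
    svQtPartialSum NB qt i n = svQtPartialSum NB qt i' n :=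
  Finset.sum_congr rfl fun _ hk ↦
    svQtTerm_congr fun l hl hlk ↦ h l hl (hlk.trans (Finset.mem_range.mp hk))

theorem svQtVal_eq_partialSum_add_tsum (hi : Summable (svQtTerm NB qt i)) (n : ℕ) :
    svQtVal NB qt i = svQtPartialSum NB qt i n + ∑' t, svQtTerm NB qt i (t + n) := by
  rw [svQtPartialSum, hi.sum_add_tsum_nat_add, hi.tsum_eq_zero_add]
  simp [svQtVal, svQtTerm, prodQt]

theorem svQtSigma_succ_eq_partialSum_add_tsum_div {p : ℕ} (hq : qt (i (p + 1)) (p + 1) ≠ 0) :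
    svQtSigma NB qt i (p + 1) = svQtPartialSum NB qt i p +
      (∑' t, svQtTerm NB qt i (t + (p + 1))) / qt (i (p + 1)) (p + 1) := by
  rw [svQtSigma, Nat.add_sub_cancel, sum_Icc_eq_svQtPartialSum, ← tsum_div_const]
  congr 1
  refine tsum_congr fun t ↦ ?_
  rw [svQtTerm, add_comm t, prodQt_add, prodQt_succ, add_right_comm (p + 1) t 1]
  field_simp

theorem svQtSigma_succ_eq_svQtVal_div_add (hi : Summable (svQtTerm NB qt i)) {p : ℕ}
    (hq : qt (i (p + 1)) (p + 1) ≠ 0) :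
    svQtSigma NB qt i (p + 1) = svQtVal NB qt i / qt (i (p + 1)) (p + 1) +
      (svQtPartialSum NB qt i p - svQtPartialSum NB qt i (p + 1) / qt (i (p + 1)) (p + 1)) := by
  rw [svQtSigma_succ_eq_partialSum_add_tsum_div hq, svQtVal_eq_partialSum_add_tsum hi (p + 1)]
  ring

theorem stmt_19_general (hi : Summable (svQtTerm NB qt i)) (hi' : Summable (svQtTerm NB qt i'))
    {m : ℕ} (hm : 1 ≤ m) (hq : qt (i m) m ≠ 0) (hagree : ∀ k, 1 ≤ k → k ≤ m → i k = i' k) :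
    svQtSigma NB qt i m - svQtSigma NB qt i' m =
      (svQtVal NB qt i - svQtVal NB qt i') / qt (i m) m := by
  obtain ⟨p, rfl⟩ := Nat.exists_eq_add_of_le' hm
  have hdigit : i (p + 1) = i' (p + 1) := hagree (p + 1) hm le_rfl
  have hpartial : svQtPartialSum NB qt i p = svQtPartialSum NB qt i' p :=
    svQtPartialSum_congr fun k hk hkp ↦ hagree k hk (hkp.trans p.le_succ)
  rw [svQtSigma_succ_eq_svQtVal_div_add hi hq,
    svQtSigma_succ_eq_svQtVal_div_add hi' (hdigit ▸ hq), hpartial, svQtPartialSum_congr hagree,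
    hdigit]
  ring

end Expansion

theorem stmt_19 (NB : Set ℕ) (mS : ℕ → ℕ) (qt : ℕ → ℕ → ℝ)
    (hmS : ∀ n, 1 ≤ n → 1 ≤ mS n)
    (hpos : ∀ n, 1 ≤ n → ∀ d, d ≤ mS n → 0 < qt d n)
    (hsum : ∀ n, 1 ≤ n → ∑ d ∈ Finset.range (mS n + 1), qt d n = 1)
    (hzero : ∀ d : ℕ → ℕ, (∀ j, 1 ≤ j → d j ≤ mS j) →
      Filter.Tendsto (fun n => prodQt qt d n) Filter.atTop (nhds 0))
    (m : ℕ) (hm : 1 ≤ m) (i i' : ℕ → ℕ)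
    (hdig : ∀ n, 1 ≤ n → i n ≤ mS n) (hdig' : ∀ n, 1 ≤ n → i' n ≤ mS n)
    (hagree : ∀ k, 1 ≤ k → k ≤ m → i k = i' k) :
    svQtSigma NB qt i m - svQtSigma NB qt i' m =
      (svQtVal NB qt i - svQtVal NB qt i') / qt (i m) m := by
  have hconv {d : ℕ → ℕ} (hd : ∀ n, 1 ≤ n → d n ≤ mS n) : Summable (svQtTerm NB qt d) :=
    summable_svQtTerm (fun n hn t ht ↦ (hpos n hn t ht).le) (fun n hn ↦ (hsum n hn).le) hd
  exact stmt_19_general (hconv hdig) (hconv hdig') hm (hpos m hm _ (hdig m hm)).ne' hagree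
end
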